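/- arXiv:math/9712237 — 2 statements merged into one kernel-verified Lean document; each statement's English description precedes it below -/
import Mathlib

section
/- Let k be a positive integer and c_1, …, c_k nonnegative integers. For a permutation π, let a_i(π) denote the number of cycles of π of length i. Then lim_{n→∞} #{π ∈ S_n : a_i(π) = c_i for all 1 ≤ i ≤ k} / n! = ∏_{i=1}^k e^{−1/i} · (1/i)^{c_i} / c_i!. That is, the joint distribution of (a_1, …, a_k) for a uniformly random permutation of S_n converges, as n → ∞, to that of independent Poisson random variables with parameters 1, 1/2, …, 1/k. -/
/-- `a_i(π)`: the number of cycles (orbits) of length `i` of the permutation `π`. -/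
noncomputable def numCycles (n : ℕ) (π : Equiv.Perm (Fin n)) (i : ℕ) : ℕ :=
  Set.ncard {o : Set (Fin n) | (∃ x, o = {y | π.SameCycle x y}) ∧ o.ncard = i}

/-!
By Cauchy's formula, a uniformly random permutation of `n` letters has cycle type `p` with
probability `∏ i, (1 / i) ^ aᵢ / aᵢ!`, where `aᵢ` is the multiplicity of `i` in the partition `p`
of `n`. These weights are multiplicative, so prescribing `aᵢ = cᵢ` for `i ∈ s` contributes the
factor `∏ i ∈ s, (1 / i) ^ cᵢ / cᵢ!` and leaves the total weight of the partitions of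
`n - ∑ i ∈ s, i * cᵢ` with no part in `s`. The generating function of the latter is
`∏ i ∉ s, exp (X ^ i / i) = (1 - X)⁻¹ * ∏ i ∈ s, exp (-X ^ i / i)`; as the series `exp (-X ^ i / i)`
converge absolutely at `1`, its coefficients tend to `∏ i ∈ s, exp (-1 / i)`.
-/

section

open Finset Filter PowerSeries Topology
open scoped Nat PowerSeries.WithPiTopology

section Cycles

variable {α : Type*}

/-- The orbits of size `i` of a permutation, so that `numCycles n π i = (orbitsOfCard π i).ncard`
holds by definition. -/
def orbitsOfCard (π : Equiv.Perm α) (i : ℕ) : Set (Set α) :=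
  {o | (∃ x, o = {y | π.SameCycle x y}) ∧ o.ncard = i}

lemma setOf_sameCycle_eq_singleton {π : Equiv.Perm α} {x : α} (hx : π x = x) :
    {y | π.SameCycle x y} = {x} :=
  Set.eq_singleton_iff_unique_mem.2 ⟨.refl π x, fun _ hy => (hy.eq_of_left hx).symm⟩

variable [Fintype α] [DecidableEq α]

lemma setOf_sameCycle_eq_support_cycleOf {π : Equiv.Perm α} {x : α} (hx : π x ≠ x) :
    {y | π.SameCycle x y} = (π.cycleOf x).support :=
  Set.ext fun _ => (Equiv.Perm.mem_support_cycleOf_iff' hx).symm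

lemma orbitsOfCard_one (π : Equiv.Perm α) :
    orbitsOfCard π 1 = (fun x => {x}) '' (π.supportᶜ : Finset α) := by
  ext o
  constructor
  · rintro ⟨⟨x, rfl⟩, hcard⟩
    by_cases hx : π x = x
    · exact ⟨x, by simpa using hx, (setOf_sameCycle_eq_singleton hx).symm⟩
    · rw [setOf_sameCycle_eq_support_cycleOf hx, Set.ncard_coe_finset] at hcard
      exact absurd hcard (Equiv.Perm.card_support_ne_one _)
  · rintro ⟨x, hx, rfl⟩
    exact ⟨⟨x, (setOf_sameCycle_eq_singleton (by simpa using hx)).symm⟩, Set.ncard_singleton x⟩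

lemma orbitsOfCard_eq_image_support (π : Equiv.Perm α) {i : ℕ} (hi : i ≠ 1) :
    orbitsOfCard π i = (fun g : Equiv.Perm α => (g.support : Set α)) ''
      ({g ∈ π.cycleFactorsFinset | i = #g.support} : Finset (Equiv.Perm α)) := by
  ext o
  simp only [coe_filter, Set.mem_image, Set.mem_ofPred_eq]
  constructor
  · rintro ⟨⟨x, rfl⟩, hcard⟩
    by_cases hx : π x = x
    · rw [setOf_sameCycle_eq_singleton hx, Set.ncard_singleton] at hcard
      exact absurd hcard.symm hi
    · rw [setOf_sameCycle_eq_support_cycleOf hx, Set.ncard_coe_finset] at hcard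
      exact ⟨π.cycleOf x, ⟨Equiv.Perm.cycleOf_mem_cycleFactorsFinset_iff.2
        (Equiv.Perm.mem_support.2 hx), hcard.symm⟩, (setOf_sameCycle_eq_support_cycleOf hx).symm⟩
  · rintro ⟨g, ⟨hg, rfl⟩, rfl⟩
    obtain ⟨x, hxg⟩ := (Equiv.Perm.mem_cycleFactorsFinset_iff.1 hg).1.nonempty_support
    have hx := Equiv.Perm.mem_support.1 (Equiv.Perm.mem_cycleFactorsFinset_support_le hg hxg)
    refine ⟨⟨x, ?_⟩, Set.ncard_coe_finset _⟩
    rw [setOf_sameCycle_eq_support_cycleOf hx, ← Equiv.Perm.cycle_is_cycleOf hxg hg]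

lemma injOn_support_cycleFactorsFinset (π : Equiv.Perm α) :
    Set.InjOn (fun g => (g.support : Set α)) (π.cycleFactorsFinset : Set (Equiv.Perm α)) := by
  intro g hg h hh hsupp
  obtain ⟨x, hxg⟩ := (Equiv.Perm.mem_cycleFactorsFinset_iff.1 hg).1.nonempty_support
  have hxh : x ∈ h.support := coe_injective hsupp ▸ hxg
  rw [Equiv.Perm.cycle_is_cycleOf hxg hg, Equiv.Perm.cycle_is_cycleOf hxh hh]

lemma ncard_orbitsOfCard (π : Equiv.Perm α) {i : ℕ} (hi : i ≠ 0) :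
    (orbitsOfCard π i).ncard = π.partition.parts.count i := by
  rw [Equiv.Perm.parts_partition, Multiset.count_add]
  rcases eq_or_ne i 1 with rfl | hi1
  · have hcycleType : π.cycleType.count 1 = 0 :=
      Multiset.count_eq_zero.2 fun h => (Equiv.Perm.one_lt_of_mem_cycleType h).false
    rw [orbitsOfCard_one, Set.ncard_image_of_injective _ Set.singleton_injective,
      Set.ncard_coe_finset, card_compl, hcycleType, Multiset.count_replicate_self, zero_add]
  · have hinj := (injOn_support_cycleFactorsFinset π).mono
      (coe_subset.2 (filter_subset (fun g => i = #g.support) _))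
    rw [orbitsOfCard_eq_image_support π hi1, hinj.ncard_image, Set.ncard_coe_finset,
      Multiset.count_replicate, if_neg hi1.symm, add_zero, Equiv.Perm.cycleType_def,
      Multiset.count_map]
    rfl

end Cycles

section Weights

/-- The mass at `j` of the Poisson distribution of parameter `1 / i`, without the normalizing factor
`exp (-1 / i)`. -/
noncomputable def poissonWeight (i j : ℕ) : ℝ :=
  (1 / (i : ℝ)) ^ j / j !

lemma poissonWeight_zero_right (i : ℕ) : poissonWeight i 0 = 1 := by
  simp [poissonWeight]

/-- The probability that a random permutation of `m.sum` letters has the elements of `m` as its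
cycle lengths, fixed points included; see `card_partition_eq`. -/
noncomputable def cycleWeight (m : Multiset ℕ) : ℝ :=
  m.toFinsupp.prod poissonWeight

lemma cycleWeight_add {m m' : Multiset ℕ} (h : Disjoint m m') :
    cycleWeight (m + m') = cycleWeight m * cycleWeight m' := by
  rw [cycleWeight, Multiset.toFinsupp_add, Finsupp.prod_add_index_of_disjoint
    (by simpa only [Multiset.toFinsupp_support, Multiset.disjoint_toFinset] using h)]
  rfl

lemma cycleWeight_eq_prod {s : Finset ℕ} {m : Multiset ℕ} (h : m.toFinset ⊆ s) :
    cycleWeight m = ∏ i ∈ s, poissonWeight i (m.count i) :=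
  Finsupp.prod_of_support_subset _ h _ fun i _ => poissonWeight_zero_right i

lemma cycleWeight_replicate_one (j : ℕ) : cycleWeight (Multiset.replicate j 1) = 1 / j ! := by
  have hsub : (Multiset.replicate j 1).toFinset ⊆ {1} := fun i hi =>
    mem_singleton.2 (Multiset.eq_of_mem_replicate (Multiset.mem_toFinset.1 hi))
  simp [cycleWeight_eq_prod hsub, poissonWeight]

lemma cycleWeight_eq_inv (m : Multiset ℕ) :
    cycleWeight m = ((m.prod : ℝ) * ∏ i ∈ m.toFinset, ((m.count i)! : ℝ))⁻¹ := by
  rw [cycleWeight_eq_prod subset_rfl, prod_multiset_count, Nat.cast_prod, ← prod_mul_distrib,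
    ← prod_inv_distrib]
  refine prod_congr rfl fun i _ => ?_
  rw [poissonWeight, mul_inv, Nat.cast_pow, one_div, inv_pow, div_eq_mul_inv]

lemma parts_eq_filter_add_replicate_one {n : ℕ} (p : n.Partition) :
    p.parts = p.parts.filter (2 ≤ ·) +
      Multiset.replicate (n - (p.parts.filter (2 ≤ ·)).sum) 1 := by
  have hones : p.parts.filter (¬ 2 ≤ ·) = Multiset.replicate (p.parts.filter (¬ 2 ≤ ·)).card 1 := by
    refine Multiset.eq_replicate_card.2 fun i hi => ?_
    obtain ⟨hmem, hlt⟩ := Multiset.mem_filter.1 hi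
    have := p.parts_pos hmem
    omega
  have hsplit := Multiset.filter_add_not (2 ≤ ·) p.parts
  have hsum := congrArg Multiset.sum hsplit
  rw [hones] at hsplit hsum
  rw [Multiset.sum_add, p.parts_sum, Multiset.sum_replicate, smul_eq_mul, mul_one] at hsum
  rw [← Nat.eq_sub_of_add_eq' hsum, hsplit]

lemma sum_filter_parts_le {n : ℕ} (p : n.Partition) (P : ℕ → Prop) [DecidablePred P] :
    (p.parts.filter P).sum ≤ n := by
  obtain ⟨m, hm⟩ := Multiset.le_iff_exists_add.1 (Multiset.filter_le P p.parts)
  calc (p.parts.filter P).sum ≤ (p.parts.filter P + m).sum := by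
        rw [Multiset.sum_add]
        exact Nat.le_add_right _ _
    _ = n := by rw [← hm, p.parts_sum]

lemma cycleWeight_parts {n : ℕ} (p : n.Partition) :
    cycleWeight p.parts = cycleWeight (p.parts.filter (2 ≤ ·)) *
      (1 / (n - (p.parts.filter (2 ≤ ·)).sum)!) := by
  have hdisj : Disjoint (p.parts.filter (2 ≤ ·))
      (Multiset.replicate (n - (p.parts.filter (2 ≤ ·)).sum) 1) :=
    Multiset.disjoint_left.2 fun hi hi' => by
      have := (Multiset.mem_filter.1 hi).2
      have := Multiset.eq_of_mem_replicate hi'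
      omega
  conv_lhs => rw [parts_eq_filter_add_replicate_one p]
  rw [cycleWeight_add hdisj, cycleWeight_replicate_one]

variable {α : Type*} [Fintype α] [DecidableEq α]

lemma partition_eq_iff_cycleType_eq (π : Equiv.Perm α) (p : (Fintype.card α).Partition) :
    π.partition = p ↔ π.cycleType = p.parts.filter (2 ≤ ·) := by
  constructor
  · rintro rfl
    exact Equiv.Perm.filter_parts_partition_eq_cycleType.symm
  · intro h
    rw [Nat.Partition.ext_iff, Equiv.Perm.parts_partition, parts_eq_filter_add_replicate_one p,
      ← Equiv.Perm.sum_cycleType, h]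

lemma card_partition_eq (p : (Fintype.card α).Partition) :
    (#{π : Equiv.Perm α | π.partition = p} : ℝ) = (Fintype.card α)! * cycleWeight p.parts := by
  have hcard := Equiv.Perm.card_of_cycleType_mul_eq α (p.parts.filter (2 ≤ ·))
  rw [if_pos ⟨sum_filter_parts_le p _, fun i hi => (Multiset.mem_filter.1 hi).2⟩] at hcard
  simp only [← partition_eq_iff_cycleType_eq] at hcard
  rw [cycleWeight_parts, cycleWeight_eq_inv, ← hcard]
  push_cast
  field_simp

/-- The probability that a random permutation of `n` letters has exactly `c i` cycles of length `i`
for each `i ∈ s`, written as a sum over partitions of `n`; see `card_count_partition_eq`. -/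
noncomputable def cycleCountProb (s : Finset ℕ) (c : ℕ → ℕ) (n : ℕ) : ℝ :=
  ∑ p : n.Partition with ∀ i ∈ s, p.parts.count i = c i, cycleWeight p.parts

lemma card_count_partition_eq {n : ℕ} (hn : Fintype.card α = n) (s : Finset ℕ) (c : ℕ → ℕ) :
    (#{π : Equiv.Perm α | ∀ i ∈ s, π.partition.parts.count i = c i} : ℝ) =
      n ! * cycleCountProb s c n := by
  subst hn
  rw [cycleCountProb, mul_sum, card_eq_sum_card_fiberwise (f := Equiv.Perm.partition)
    (t := {p | ∀ i ∈ s, p.parts.count i = c i}) fun π hπ => by simpa using hπ, Nat.cast_sum]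
  refine sum_congr rfl fun p hp => ?_
  rw [← card_partition_eq, filter_filter]
  congr! 3 with π
  exact and_iff_right_of_imp fun h => h ▸ (mem_filter.1 hp).2

lemma natCard_numCycles_div_factorial {s : Finset ℕ} (hs : 0 ∉ s) (c : ℕ → ℕ) (n : ℕ) :
    (Nat.card {π : Equiv.Perm (Fin n) // ∀ i ∈ s, numCycles n π i = c i} : ℝ) / n ! =
      cycleCountProb s c n := by
  have hnum : ∀ π : Equiv.Perm (Fin n), (∀ i ∈ s, numCycles n π i = c i) ↔
      ∀ i ∈ s, π.partition.parts.count i = c i := fun π =>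
    forall₂_congr fun i hi => by
      rw [← ncard_orbitsOfCard π (ne_of_mem_of_not_mem hi hs)]
      rfl
  simp only [hnum]
  rw [Nat.card_eq_fintype_card, Fintype.card_subtype, card_count_partition_eq (Fintype.card_fin n),
    mul_div_cancel_left₀ _ (Nat.cast_ne_zero.2 n.factorial_ne_zero)]

lemma cycleCountProb_empty (c : ℕ → ℕ) (n : ℕ) : cycleCountProb ∅ c n = 1 := by
  rw [← natCard_numCycles_div_factorial (notMem_empty 0)]
  simp [Nat.card_eq_fintype_card, Fintype.card_subtype, Fintype.card_perm, Nat.factorial_ne_zero]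

end Weights

section PrescribedParts

/-- The multiset containing each `i ∈ s` exactly `c i` times. -/
def prescribedParts (s : Finset ℕ) (c : ℕ → ℕ) : Multiset ℕ :=
  ∑ i ∈ s, Multiset.replicate (c i) i

lemma count_prescribedParts (s : Finset ℕ) (c : ℕ → ℕ) (i : ℕ) :
    (prescribedParts s c).count i = if i ∈ s then c i else 0 := by
  simp [prescribedParts, Multiset.count_sum', Multiset.count_replicate]

lemma mem_of_mem_prescribedParts {s : Finset ℕ} {c : ℕ → ℕ} {i : ℕ}
    (hi : i ∈ prescribedParts s c) : i ∈ s := by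
  by_contra his
  exact Multiset.count_ne_zero.2 hi (by rw [count_prescribedParts, if_neg his])

lemma cycleWeight_prescribedParts (s : Finset ℕ) (c : ℕ → ℕ) :
    cycleWeight (prescribedParts s c) = ∏ i ∈ s, poissonWeight i (c i) := by
  rw [cycleWeight_eq_prod fun i hi => mem_of_mem_prescribedParts (Multiset.mem_toFinset.1 hi)]
  exact prod_congr rfl fun i hi => by rw [count_prescribedParts, if_pos hi]

lemma prescribedParts_le_of_count_eq {s : Finset ℕ} {c : ℕ → ℕ} {m : Multiset ℕ}
    (h : ∀ i ∈ s, m.count i = c i) : prescribedParts s c ≤ m := by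
  refine Multiset.le_iff_count.2 fun i => ?_
  rw [count_prescribedParts]
  split_ifs with hi
  · exact (h i hi).ge
  · exact Nat.zero_le _

/-- The partition of `n + (prescribedParts s c).sum` obtained from a partition of `n` by adjoining
`c i` parts equal to `i` for each `i ∈ s`. -/
def addPrescribedParts {s : Finset ℕ} (hs : 0 ∉ s) (c : ℕ → ℕ) {n : ℕ} (p : n.Partition) :
    (n + (prescribedParts s c).sum).Partition where
  parts := p.parts + prescribedParts s c
  parts_pos hi := (Multiset.mem_add.1 hi).elim p.parts_pos fun h =>
    Nat.pos_of_ne_zero (ne_of_mem_of_not_mem (mem_of_mem_prescribedParts h) hs)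
  parts_sum := by rw [Multiset.sum_add, p.parts_sum]

lemma addPrescribedParts_injective {s : Finset ℕ} (hs : 0 ∉ s) (c : ℕ → ℕ) (n : ℕ) :
    Function.Injective (addPrescribedParts hs c (n := n)) := fun _ _ h =>
  Nat.Partition.ext (add_right_cancel (congrArg Nat.Partition.parts h))

lemma exists_addPrescribedParts_eq {s : Finset ℕ} (hs : 0 ∉ s) {c : ℕ → ℕ} {n : ℕ}
    {p : (n + (prescribedParts s c).sum).Partition} (hp : ∀ i ∈ s, p.parts.count i = c i) :
    ∃ q : n.Partition, (∀ i ∈ s, q.parts.count i = 0) ∧ addPrescribedParts hs c q = p := by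
  obtain ⟨m, hm⟩ := Multiset.le_iff_exists_add.1 (prescribedParts_le_of_count_eq hp)
  have hm_sum : m.sum = n := by
    have := congrArg Multiset.sum hm
    rw [p.parts_sum, Multiset.sum_add] at this
    omega
  refine ⟨⟨m, fun hi => p.parts_pos (hm ▸ Multiset.mem_add.2 (.inr hi)), hm_sum⟩, fun i hi => ?_,
    Nat.Partition.ext ((add_comm _ _).trans hm.symm)⟩
  have := hp i hi
  rw [hm, Multiset.count_add, count_prescribedParts, if_pos hi] at this
  simpa using this

lemma cycleCountProb_add_sum_prescribedParts {s : Finset ℕ} (hs : 0 ∉ s) (c : ℕ → ℕ) (n : ℕ) :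
    cycleCountProb s c (n + (prescribedParts s c).sum) =
      (∏ i ∈ s, poissonWeight i (c i)) * cycleCountProb s 0 n := by
  rw [cycleCountProb, cycleCountProb, mul_sum]
  refine (sum_nbij (addPrescribedParts hs c) (fun p hp => ?_)
    (addPrescribedParts_injective hs c n).injOn (fun p hp => ?_) fun p hp => ?_).symm
  · refine mem_filter.2 ⟨mem_univ _, fun i hi => ?_⟩
    rw [addPrescribedParts, Multiset.count_add, (mem_filter.1 hp).2 i hi, count_prescribedParts,
      if_pos hi, Pi.zero_apply, zero_add]
  · obtain ⟨q, hq, rfl⟩ := exists_addPrescribedParts_eq hs (mem_filter.1 hp).2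
    exact ⟨q, mem_coe.2 (mem_filter.2 ⟨mem_univ _, hq⟩), rfl⟩
  · have hdisj : Disjoint p.parts (prescribedParts s c) := Multiset.disjoint_right.2 fun hi =>
      Multiset.count_eq_zero.1 ((mem_filter.1 hp).2 _ (mem_of_mem_prescribedParts hi))
    rw [addPrescribedParts, cycleWeight_add hdisj, cycleWeight_prescribedParts, mul_comm]

end PrescribedParts

section GeneratingFunction

/-- The power series `exp (t * X ^ i)`. -/
noncomputable def expMulXPow (i : ℕ) (hi : i ≠ 0) (t : ℝ) : ℝ⟦X⟧ :=
  expand i hi (rescale t (exp ℝ))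

lemma expMulXPow_neg_mul (i : ℕ) (hi : i ≠ 0) (t : ℝ) :
    expMulXPow i hi (-t) * expMulXPow i hi t = 1 := by
  rw [expMulXPow, expMulXPow, ← map_mul, exp_mul_exp_eq_exp_add, neg_add_cancel, rescale_zero]
  simp

lemma coeff_expMulXPow_mul (i : ℕ) (hi : i ≠ 0) (t : ℝ) (j : ℕ) :
    coeff (i * j) (expMulXPow i hi t) = t ^ j / j ! := by
  simp [expMulXPow, coeff_rescale, coeff_exp, div_eq_mul_inv]

lemma coeff_expMulXPow_of_notMem_range (i : ℕ) (hi : i ≠ 0) (t : ℝ) {n : ℕ}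
    (hn : n ∉ Set.range (i * ·)) : coeff n (expMulXPow i hi t) = 0 :=
  coeff_expand_of_not_dvd i hi _ fun ⟨j, hj⟩ => hn ⟨j, hj.symm⟩

lemma hasSum_coeff_expMulXPow (i : ℕ) (hi : i ≠ 0) (t : ℝ) :
    HasSum (fun n => coeff n (expMulXPow i hi t)) (Real.exp t) := by
  rw [← (mul_right_injective₀ hi).hasSum_iff fun n => coeff_expMulXPow_of_notMem_range i hi t]
  simp only [Function.comp_def, coeff_expMulXPow_mul, Real.exp_eq_exp_ℝ]
  exact NormedSpace.expSeries_div_hasSum_exp t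

lemma hasSum_smul_X_pow_expMulXPow (i : ℕ) (hi : i ≠ 0) (t : ℝ) :
    HasSum (fun j => (t ^ j / j ! : ℝ) • (X : ℝ⟦X⟧) ^ (i * j)) (expMulXPow i hi t) := by
  have hmonomial (j : ℕ) : (t ^ j / j ! : ℝ) • (X : ℝ⟦X⟧) ^ (i * j) =
      monomial (i * j) (coeff (i * j) (expMulXPow i hi t)) := by
    rw [coeff_expMulXPow_mul, X_pow_eq, ← map_smul, smul_eq_mul, mul_one]
  simp only [hmonomial]
  refine ((mul_right_injective₀ hi).hasSum_iff fun n hn => ?_).2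
    (hasSum_of_monomials_self (expMulXPow i hi t))
  rw [coeff_expMulXPow_of_notMem_range i hi t hn, map_zero]

lemma one_add_tsum_poissonWeight (i : ℕ) (hi : i ≠ 0) :
    1 + ∑' j, poissonWeight i (j + 1) • (X : ℝ⟦X⟧) ^ (i * (j + 1)) = expMulXPow i hi (1 / i) := by
  have h := hasSum_smul_X_pow_expMulXPow i hi (1 / i)
  rw [← h.tsum_eq, h.summable.tsum_eq_zero_add]
  simp [poissonWeight]

/-- The weights `f` for which `Nat.Partition.genFun f` counts only the partitions with no part in
`s`, each with its cycle weight. -/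
noncomputable def avoidingWeight (s : Finset ℕ) (i j : ℕ) : ℝ :=
  if i ∈ s then 0 else poissonWeight i j

lemma coeff_genFun_avoidingWeight (s : Finset ℕ) (n : ℕ) :
    coeff n (Nat.Partition.genFun (avoidingWeight s)) = cycleCountProb s 0 n := by
  rw [Nat.Partition.coeff_genFun, cycleCountProb, sum_filter]
  refine sum_congr rfl fun p _ => ?_
  split_ifs with h
  · refine Finsupp.prod_congr fun i hi => if_neg fun his => ?_
    exact Finsupp.mem_support_iff.1 hi (h i his)
  · push Not at h
    obtain ⟨i, his, hi⟩ := h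
    exact prod_eq_zero (Finsupp.mem_support_iff.2 hi) (if_pos his)

lemma genFun_avoidingWeight_eq_mul {s : Finset ℕ} {i : ℕ} (hi : i ≠ 0) (his : i ∉ s) :
    Nat.Partition.genFun (avoidingWeight s) =
      Nat.Partition.genFun (avoidingWeight (insert i s)) * expMulXPow i hi (1 / i) := by
  obtain ⟨k, rfl⟩ := Nat.exists_eq_add_one_of_ne_zero hi
  have hprod := (Nat.Partition.hasProd_genFun (avoidingWeight (insert (k + 1) s))).mul
    (hasProd_ite_eq k (expMulXPow (k + 1) hi (1 / (k + 1 : ℕ))))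
  refine (Nat.Partition.hasProd_genFun (avoidingWeight s)).unique (hprod.congr_fun fun l => ?_)
  rcases eq_or_ne l k with rfl | hl
  · simp [avoidingWeight, his, one_add_tsum_poissonWeight _ hi]
  · simp [avoidingWeight, hl]

lemma genFun_avoidingWeight_insert {s : Finset ℕ} {i : ℕ} (hi : i ≠ 0) (his : i ∉ s) :
    Nat.Partition.genFun (avoidingWeight (insert i s)) =
      expMulXPow i hi (-(1 / i)) * Nat.Partition.genFun (avoidingWeight s) := by
  rw [genFun_avoidingWeight_eq_mul hi his, mul_left_comm, expMulXPow_neg_mul, mul_one]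

end GeneratingFunction

section Limit

lemma tendsto_coeff_mul {R : Type*} [NormedRing R] [CompleteSpace R] {f g : R⟦X⟧} {b : R}
    (hf : Summable fun n => ‖coeff n f‖) (hg : Tendsto (fun n => coeff n g) atTop (𝓝 b)) :
    Tendsto (fun n => coeff n (f * g)) atTop (𝓝 ((∑' n, coeff n f) * b)) := by
  obtain ⟨B, hB⟩ := hg.norm.bddAbove_range
  have hbound : ∀ n, ‖coeff n g‖ ≤ B := fun n => hB ⟨n, rfl⟩
  have hcoeff : ∀ n, coeff n (f * g) =
      ∑' j, if j ≤ n then coeff j f * coeff (n - j) g else 0 := fun n => by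
    rw [coeff_mul, Nat.sum_antidiagonal_eq_sum_range_succ fun j l => coeff j f * coeff l g,
      tsum_eq_sum (s := range (n + 1)) fun j hj => if_neg (by simpa using hj)]
    exact sum_congr rfl fun j hj => (if_pos (mem_range_succ_iff.1 hj)).symm
  simp only [hcoeff, ← hf.of_norm.tsum_mul_right b]
  refine tendsto_tsum_of_dominated_convergence (hf.mul_right B) (fun j => ?_)
    (.of_forall fun n j => ?_)
  · refine ((hg.comp (tendsto_sub_atTop_nat j)).const_mul (coeff j f)).congr' ?_
    filter_upwards [eventually_ge_atTop j] with n hn using (if_pos hn).symm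
  · split_ifs
    · exact (norm_mul_le _ _).trans (mul_le_mul_of_nonneg_left (hbound _) (norm_nonneg _))
    · rw [norm_zero]
      exact mul_nonneg (norm_nonneg _) ((norm_nonneg _).trans (hbound 0))

lemma tendsto_cycleCountProb_zero {s : Finset ℕ} (hs : 0 ∉ s) :
    Tendsto (cycleCountProb s 0) atTop (𝓝 (∏ i ∈ s, Real.exp (-(1 / (i : ℝ))))) := by
  induction s using Finset.induction_on with
  | empty =>
    rw [prod_empty, funext (cycleCountProb_empty 0)]
    exact tendsto_const_nhds
  | insert i s his ih =>
    have hi : i ≠ 0 := ne_of_mem_of_not_mem (mem_insert_self i s) hs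
    have hexp := hasSum_coeff_expMulXPow i hi (-(1 / i))
    have ih := ih fun h => hs (mem_insert_of_mem h)
    simp only [← funext (coeff_genFun_avoidingWeight _)] at ih ⊢
    rw [genFun_avoidingWeight_insert hi his, prod_insert his, ← hexp.tsum_eq]
    exact tendsto_coeff_mul hexp.summable.norm ih

end Limit

theorem stmt_16_general {s : Finset ℕ} (hs : 0 ∉ s) (c : ℕ → ℕ) :
    Tendsto (fun n : ℕ =>
        (Nat.card {π : Equiv.Perm (Fin n) // ∀ i ∈ s, numCycles n π i = c i} : ℝ) / n !)
      atTop
      (𝓝 (∏ i ∈ s, Real.exp (-(1 / (i : ℝ))) * (1 / (i : ℝ)) ^ c i / (c i)!)) := by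
  simp only [natCard_numCycles_div_factorial hs, mul_div_assoc]
  rw [← tendsto_add_atTop_iff_nat (prescribedParts s c).sum, prod_mul_distrib, mul_comm]
  simp only [cycleCountProb_add_sum_prescribedParts hs]
  exact (tendsto_cycleCountProb_zero hs).const_mul _

end

/-- For `k ≥ 1` and nonnegative integers `c_1, …, c_k`:
`lim_{n→∞} #{π ∈ Sₙ : a_i(π) = c_i, 1 ≤ i ≤ k} / n! = ∏_{i=1}^k e^{−1/i} (1/i)^{c_i} / c_i!`:
the joint distribution of `(a_1, …, a_k)` for a uniform permutation of `Sₙ` converges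
to independent Poisson(1), Poisson(1/2), …, Poisson(1/k). -/
theorem stmt_16 (k : ℕ) (hk : 0 < k) (c : ℕ → ℕ) :
    Filter.Tendsto (fun n : ℕ =>
        (Nat.card {π : Equiv.Perm (Fin n) //
            ∀ i, 1 ≤ i → i ≤ k → numCycles n π i = c i} : ℝ) / n.factorial)
      Filter.atTop
      (nhds (∏ i ∈ Finset.Icc 1 k,
        Real.exp (-(1 / (i : ℝ))) * (1 / (i : ℝ)) ^ c i / (c i).factorial)) := by
  simpa only [Finset.mem_Icc, and_imp] using stmt_16_general (s := Finset.Icc 1 k) (by simp) c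
end

section
/- Let q be a real number with q ≥ 2, let u be a real number with 0 < u < 1, and let λ be a nonempty partition with c = λ'_1 parts. Then u / ( q^c (q^{c+1} − 1) ) + ∑_{s=2}^∞ u · ( q^{−λ'_s} − q^{−λ'_{s−1}} ) / ( q^c − 1 ) = u·q / ( q^{c+1} − 1 ), and this quantity is strictly less than 1. (The sum has only finitely many nonzero terms, since λ'_s = λ'_{s−1} for all large s.) -/
/-!
Column lengths are eventually `0`, so the sum over the columns `s ≥ 2` telescopes to
`u * (1 - q ^ (-c)) / (q ^ c - 1) = u / q ^ c`; adding the weight of the first column gives the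
closed form. Its denominator grows with `c`, so it is below `1` as soon as it is for `c = 1`, that
is, as soon as `u * q < q ^ 2 - 1`.
-/

open Filter

theorem finsum_nat_ge_eq_finsum_add {M : Type*} [AddCommMonoid M] (k : ℕ) (f : ℕ → M) :
    ∑ᶠ (s : ℕ) (_ : k ≤ s), f s = ∑ᶠ n, f (n + k) := by
  have range_add : Set.range (· + k) = Set.Ici k := by
    simpa using Set.range_add_eq_image_Ici (f := id) (k := k)
  calc
    _ = ∑ᶠ s ∈ Set.range (· + k), f s := by simp only [range_add, Set.mem_Ici]
    _ = ∑ᶠ n, f (n + k) := finsum_mem_range (add_left_injective k)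

theorem finsum_succ_sub_eq_of_eventually_eq {G : Type*} [AddCommGroup G] {f : ℕ → G} {a : G}
    (hf : ∀ᶠ n in atTop, f n = a) : ∑ᶠ n, (f (n + 1) - f n) = a - f 0 := by
  obtain ⟨N, hN⟩ := eventually_atTop.mp hf
  have support_subset : (Function.support fun n => f (n + 1) - f n) ⊆ Finset.range N := by
    intro n hn
    by_contra hnN
    have hle : N ≤ n := by simpa using hnN
    exact hn (sub_eq_zero.mpr ((hN _ (by omega)).trans (hN n hle).symm))
  rw [finsum_eq_sum_of_support_subset _ support_subset, Finset.sum_range_sub, hN N le_rfl]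

theorem colLen_eq_zero_iff_rowLen_zero_le {μ : YoungDiagram} {j : ℕ} :
    μ.colLen j = 0 ↔ μ.rowLen 0 ≤ j := by
  rw [← not_lt, ← YoungDiagram.mem_iff_lt_rowLen, YoungDiagram.mem_iff_lt_colLen, not_lt,
    Nat.le_zero]

theorem colLen_zero_pos_iff_card_pos {μ : YoungDiagram} : 0 < μ.colLen 0 ↔ 0 < μ.card := by
  rw [← YoungDiagram.mem_iff_lt_colLen, YoungDiagram.card, Finset.card_pos]
  exact ⟨fun h => ⟨_, h⟩, fun ⟨_, h⟩ => μ.up_left_mem (Nat.zero_le _) (Nat.zero_le _) h⟩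

theorem finsum_later_column_weight {K : Type*} [Field K] (q u : K) (μ : YoungDiagram)
    (hq : q ≠ 0) (hc : q ^ μ.colLen 0 ≠ 1) :
    ∑ᶠ (s : ℕ) (_ : 2 ≤ s),
        u * ((q ^ μ.colLen (s - 1))⁻¹ - (q ^ μ.colLen (s - 2))⁻¹) / (q ^ μ.colLen 0 - 1) =
      u / q ^ μ.colLen 0 := by
  let f : ℕ → K := fun j => u * (q ^ μ.colLen j)⁻¹ / (q ^ μ.colLen 0 - 1)
  have eventually_const : ∀ᶠ j in atTop, f j = u / (q ^ μ.colLen 0 - 1) := by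
    filter_upwards [eventually_ge_atTop (μ.rowLen 0)] with j hj
    simp [f, colLen_eq_zero_iff_rowLen_zero_le.mpr hj]
  have hc' : q ^ μ.colLen 0 - 1 ≠ 0 := sub_ne_zero.mpr hc
  calc
    _ = ∑ᶠ n, (f (n + 1) - f n) := by
      rw [finsum_nat_ge_eq_finsum_add]
      simp only [f, mul_sub, sub_div, Nat.add_sub_cancel, Nat.add_succ_sub_one]
    _ = u / (q ^ μ.colLen 0 - 1) - f 0 := finsum_succ_sub_eq_of_eventually_eq eventually_const
    _ = u / q ^ μ.colLen 0 := by
      simp only [f]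
      field_simp

theorem total_column_weight {K : Type*} [Field K] (q u : K) (μ : YoungDiagram)
    (hq : q ≠ 0) (hc : q ^ μ.colLen 0 ≠ 1) (hc_succ : q ^ (μ.colLen 0 + 1) ≠ 1) :
    u / (q ^ μ.colLen 0 * (q ^ (μ.colLen 0 + 1) - 1)) +
        ∑ᶠ (s : ℕ) (_ : 2 ≤ s),
          u * ((q ^ μ.colLen (s - 1))⁻¹ - (q ^ μ.colLen (s - 2))⁻¹) / (q ^ μ.colLen 0 - 1) =
      u * q / (q ^ (μ.colLen 0 + 1) - 1) := by
  have hc_succ' : q ^ (μ.colLen 0 + 1) - 1 ≠ 0 := sub_ne_zero.mpr hc_succ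
  rw [finsum_later_column_weight q u μ hq hc]
  field_simp
  ring

theorem mul_div_pow_succ_sub_one_lt_one {K : Type*} [Field K] [LinearOrder K]
    [IsStrictOrderedRing K] {q u : K} (hq : 1 < q) (hu : u * q < q ^ 2 - 1) {c : ℕ} (hc : c ≠ 0) :
    u * q / (q ^ (c + 1) - 1) < 1 := by
  have hpow : q ^ 2 ≤ q ^ (c + 1) := pow_le_pow_right₀ hq.le (by omega)
  have hpos : 0 < q ^ (c + 1) - 1 := sub_pos.mpr (one_lt_pow₀ hq c.succ_ne_zero)
  rw [div_lt_one hpos]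
  linarith

theorem stmt_19_general {K : Type*} [Field K] [LinearOrder K] [IsStrictOrderedRing K]
    (q u : K) (hq : 1 < q) (hu : u * q < q ^ 2 - 1) (μ : YoungDiagram) (hμ : 0 < μ.card) :
    u / (q ^ μ.colLen 0 * (q ^ (μ.colLen 0 + 1) - 1)) +
        ∑ᶠ (s : ℕ) (_ : 2 ≤ s),
          u * ((q ^ μ.colLen (s - 1))⁻¹ - (q ^ μ.colLen (s - 2))⁻¹) /
            (q ^ μ.colLen 0 - 1) =
      u * q / (q ^ (μ.colLen 0 + 1) - 1) ∧
    u * q / (q ^ (μ.colLen 0 + 1) - 1) < 1 := by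
  have hc : μ.colLen 0 ≠ 0 := (colLen_zero_pos_iff_card_pos.mpr hμ).ne'
  exact ⟨total_column_weight q u μ (zero_lt_one.trans hq).ne' (one_lt_pow₀ hq hc).ne'
      (one_lt_pow₀ hq (Nat.succ_ne_zero _)).ne',
    mul_div_pow_succ_sub_one_lt_one hq hu hc⟩

/-- For real `q ≥ 2`, `0 < u < 1` and a nonempty partition `λ` with `c = λ'_1` parts:
`u/(q^c(q^{c+1}−1)) + ∑_{s=2}^∞ u(q^{−λ'_s} − q^{−λ'_{s−1}})/(q^c−1) = uq/(q^{c+1}−1)`,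
and this total weight out of `λ` in the weighted Young lattice is strictly less
than `1`.  (Here `λ'_s = colLen (s−1)`, 0-indexed, and the sum has finitely many
nonzero terms.) -/
theorem stmt_19 (q u : ℝ) (hq : 2 ≤ q) (hu0 : 0 < u) (hu1 : u < 1)
    (μ : YoungDiagram) (hμ : 0 < μ.card) :
    u / (q ^ μ.colLen 0 * (q ^ (μ.colLen 0 + 1) - 1)) +
        ∑ᶠ (s : ℕ) (_ : 2 ≤ s),
          u * ((q ^ μ.colLen (s - 1))⁻¹ - (q ^ μ.colLen (s - 2))⁻¹) /
            (q ^ μ.colLen 0 - 1) =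
      u * q / (q ^ (μ.colLen 0 + 1) - 1) ∧
    u * q / (q ^ (μ.colLen 0 + 1) - 1) < 1 :=
  stmt_19_general q u (by linarith) (by nlinarith) μ hμ
end
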